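/- Let K be a field of characteristic zero, A_n(K) the Weyl algebra with a fixed partition of {1,…,n} into blocks of sizes n_1,…,n_p, E a free left A_n(K)-module with free generators e_1,…,e_m, N an A_n(K)-submodule of E, and G = {g_1,…,g_t} ⊆ N. Suppose G is a Gröbner basis of N with respect to each of the sequences of orders <_p; <_{p-1},<_p; …; <_{r+1},…,<_p (for some 1 ≤ r ≤ p−1), and suppose that for all g_i, g_j ∈ G the S-polynomial S_r(g_i,g_j) (<_r,<_{r+1},…,<_p)-reduces to 0 modulo G. Then G is a Gröbner basis of N with respect to the sequence of orders <_r,<_{r+1},…,<_p. -/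

import Mathlib

set_option synthInstance.maxHeartbeats 400000
set_option maxHeartbeats 1000000

open MvPolynomial

noncomputable def weylGens (n : ℕ) (K : Type) [Field K] :
    Set (Module.End K (MvPolynomial (Fin n) K)) :=
  (Set.range fun i : Fin n =>
      (LinearMap.mulLeft K (X i : MvPolynomial (Fin n) K) : Module.End K (MvPolynomial (Fin n) K))) ∪
  (Set.range fun i : Fin n => ((pderiv i).toLinearMap : Module.End K (MvPolynomial (Fin n) K)))

noncomputable def WeylAlg (n : ℕ) (K : Type) [Field K] :
    Subalgebra K (Module.End K (MvPolynomial (Fin n) K)) :=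
  Algebra.adjoin K (weylGens n K)

noncomputable def wx (n : ℕ) (K : Type) [Field K] (i : Fin n) : WeylAlg n K :=
  ⟨LinearMap.mulLeft K (X i), Algebra.subset_adjoin (Set.mem_union_left _ ⟨i, rfl⟩)⟩

noncomputable def wd (n : ℕ) (K : Type) [Field K] (i : Fin n) : WeylAlg n K :=
  ⟨(pderiv i).toLinearMap, Algebra.subset_adjoin (Set.mem_union_right _ ⟨i, rfl⟩)⟩

noncomputable def wMono (n : ℕ) (K : Type) [Field K] (α β : Fin n → ℕ) : WeylAlg n K :=
  (((List.finRange n).map fun i => wx n K i ^ α i).prod) *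
  (((List.finRange n).map fun i => wd n K i ^ β i).prod)

def ordTot (n : ℕ) (α β : Fin n → ℕ) : ℕ := (∑ i, α i) + ∑ i, β i

noncomputable def bernW (n : ℕ) (K : Type) [Field K] (r : ℤ) : Submodule K (WeylAlg n K) :=
  Submodule.span K {D | ∃ α β : Fin n → ℕ, (ordTot n α β : ℤ) ≤ r ∧ D = wMono n K α β}

noncomputable def modFil (n : ℕ) (K : Type) [Field K] (M : Type) [AddCommGroup M]
    [Module K M] [Module (WeylAlg n K) M] (m : ℕ) (g : Fin m → M) (r : ℤ) :
    Submodule K M :=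
  Submodule.span K {x | ∃ i, ∃ D ∈ bernW n K r, x = D • g i}


/-- The `j`-th order of the monomial `x^α ∂^β` with respect to the partition `B`. -/
def ordBlk {n p : ℕ} (B : Fin n → Fin p) (α β : Fin n → ℕ) (j : Fin p) : ℕ :=
  ∑ i ∈ Finset.univ.filter (fun i => B i = j), (α i + β i)

/-- An exponent pair `(α, β)` encoding the monomial `x^α ∂^β`. -/
abbrev WExp (n : ℕ) := (Fin n → ℕ) × (Fin n → ℕ)

/-- A term `θ e_i` of the free module `E`: a monomial together with the index of a
free generator. -/
abbrev WTerm (n m : ℕ) := WExp n × Fin m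

/-- The `j`-th order of a term. -/
def ordT {n p m : ℕ} (B : Fin n → Fin p) (j : Fin p) (t : WTerm n m) : ℕ :=
  ordBlk B t.1.1 t.1.2 j

/-- The comparison vector of a monomial used to define the order `<_j`:
the `j`-th order, then the other orders, then the exponents of the `j`-th block,
then the remaining exponents. -/
def keyList {n p : ℕ} (B : Fin n → Fin p) (j : Fin p) (t : WExp n) : List ℕ :=
  [ordBlk B t.1 t.2 j] ++
  (((List.finRange p).filter fun k => k ≠ j).map (ordBlk B t.1 t.2)) ++
  (((List.finRange n).filter fun i => B i = j).map t.1) ++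
  (((List.finRange n).filter fun i => B i = j).map t.2) ++
  ((((List.finRange n).filter fun i => B i ≠ j).map fun i => [t.1 i, t.2 i]).flatten)

/-- The order `<_j` on monomials. -/
def monLt {n p : ℕ} (B : Fin n → Fin p) (j : Fin p) (s t : WExp n) : Prop :=
  List.Lex (· < ·) (keyList B j s) (keyList B j t)

/-- The order `<_j` on terms of the free module. -/
def termLt {n p m : ℕ} (B : Fin n → Fin p) (j : Fin p) (s t : WTerm n m) : Prop :=
  monLt B j s.1 t.1 ∨ (s.1 = t.1 ∧ s.2 < t.2)

/-- Divisibility of terms: same free generator and componentwise smaller exponents. -/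
def tdvd {n m : ℕ} (s t : WTerm n m) : Prop :=
  s.2 = t.2 ∧ s.1.1 ≤ t.1.1 ∧ s.1.2 ≤ t.1.2

/-- The quotient monomial `t/s` of two terms with `s ∣ t`. -/
def tquot {n m : ℕ} (t s : WTerm n m) : WExp n :=
  (t.1.1 - s.1.1, t.1.2 - s.1.2)

/-- The element `θ e_i` of the free module `E = A_n(K)^m`. -/
noncomputable def termVal {n m : ℕ} (K : Type) [Field K] (t : WTerm n m) :
    Fin m → WeylAlg n K :=
  Pi.single t.2 (wMono n K t.1.1 t.1.2)

/-- `c` is the coefficient expansion of `f ∈ E` in the basis of terms. -/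
def Represents {n m : ℕ} {K : Type} [Field K] (c : WTerm n m →₀ K)
    (f : Fin m → WeylAlg n K) : Prop :=
  f = c.sum fun t a => a • termVal K t

/-- `u` is the `j`-th leader of the element represented by `c`: the greatest term
appearing in it with respect to `<_j`. -/
def IsLeader {n p m : ℕ} {K : Type} [Field K] (B : Fin n → Fin p) (j : Fin p)
    (c : WTerm n m →₀ K) (u : WTerm n m) : Prop :=
  u ∈ c.support ∧ ∀ t ∈ c.support, t ≠ u → termLt B j t u

/-- `ρ(g) ∣ ρ(f)`, where `u g`, `u f` are the leaders of `g` and `f`: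
the first leaders divide and `d_j(g) ≤ d_j(f)` for all `j`. -/
def rhoDvd {n p m : ℕ} (B : Fin n → Fin p) (hp : 0 < p)
    (ug uf : Fin p → WTerm n m) : Prop :=
  tdvd (ug ⟨0, hp⟩) (uf ⟨0, hp⟩) ∧
  ∀ j, (ordT B j (ug j) : ℤ) - (ordT B j (ug ⟨0, hp⟩) : ℤ) ≤
       (ordT B j (uf j) : ℤ) - (ordT B j (uf ⟨0, hp⟩) : ℤ)

/-- One-step `(<_k, <_{i₁}, …, <_{i_l})`-reduction of `f` to `h` modulo `g`, where `cg`
is the expansion of `g` and `ug j` its `j`-th leader. -/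
def RedStep {n p m : ℕ} {K : Type} [Field K] (B : Fin n → Fin p)
    (k : Fin p) (is : List (Fin p))
    (g : Fin m → WeylAlg n K) (cg : WTerm n m →₀ K) (ug : Fin p → WTerm n m)
    (f h : Fin m → WeylAlg n K) : Prop :=
  ∃ cf : WTerm n m →₀ K, Represents cf f ∧
    ∃ w ∈ cf.support, tdvd (ug k) w ∧
      (∀ i ∈ is, ∀ uf : WTerm n m, IsLeader B i cf uf →
        ordBlk B (tquot w (ug k)).1 (tquot w (ug k)).2 i + ordT B i (ug i) ≤
          ordT B i uf) ∧
      h = f - (cf w * (cg (ug k))⁻¹) •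
        fun j => wMono n K (tquot w (ug k)).1 (tquot w (ug k)).2 * g j

/-- The element represented by `cf` is `(<_k, <_{i₁}, …, <_{i_l})`-reduced with respect to an
element with leaders `ug`. -/
def ReducedWrt {n p m : ℕ} {K : Type} [Field K] (B : Fin n → Fin p)
    (k : Fin p) (is : List (Fin p))
    (cf : WTerm n m →₀ K) (ug : Fin p → WTerm n m) : Prop :=
  ∀ w ∈ cf.support, tdvd (ug k) w →
    ∃ i ∈ is, ∃ uf : WTerm n m, IsLeader B i cf uf ∧
      ordT B i uf <
        ordBlk B (tquot w (ug k)).1 (tquot w (ug k)).2 i + ordT B i (ug i)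

/-- `G` (given by leaders `ug`) is a Gröbner basis of `N` with respect to the sequence of
orders `<_r, <_{r+1}, …, <_p`. -/
def IsGBseq {n p m t : ℕ} {K : Type} [Field K] (B : Fin n → Fin p) (r : Fin p)
    (N : Submodule (WeylAlg n K) (Fin m → WeylAlg n K))
    (ug : Fin t → Fin p → WTerm n m) : Prop :=
  ∀ f ∈ N, f ≠ 0 → ∀ (cf : WTerm n m →₀ K) (uf : Fin p → WTerm n m),
    Represents cf f → (∀ j, IsLeader B j cf (uf j)) →
    ∃ i, tdvd (ug i r) (uf r) ∧ ∀ j, r < j →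
      ordBlk B (tquot (uf r) (ug i r)).1 (tquot (uf r) (ug i r)).2 j +
          ordT B j (ug i j) ≤ ordT B j (uf j)

/-- The `r`-th S-polynomial of `f` and `g` (with expansions `cf`, `cg` and leaders
`uf`, `ug`); it is `0` if the `r`-th leaders involve different free generators. -/
noncomputable def Spoly {n p m : ℕ} {K : Type} [Field K] (r : Fin p)
    (f g : Fin m → WeylAlg n K) (cf cg : WTerm n m →₀ K)
    (uf ug : Fin p → WTerm n m) : Fin m → WeylAlg n K :=
  if (uf r).2 = (ug r).2 then
    ((cf (uf r))⁻¹ •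
      fun j => wMono n K (fun i => max ((uf r).1.1 i) ((ug r).1.1 i) - (uf r).1.1 i)
        (fun i => max ((uf r).1.2 i) ((ug r).1.2 i) - (uf r).1.2 i) * f j) -
    ((cg (ug r))⁻¹ •
      fun j => wMono n K (fun i => max ((uf r).1.1 i) ((ug r).1.1 i) - (ug r).1.1 i)
        (fun i => max ((uf r).1.2 i) ((ug r).1.2 i) - (ug r).1.2 i) * g j)
  else 0


/-!
Let `s = r + 1`, let `f ∈ N`, and bound multipliers by the orders `d_j` of the leaders of `f` for
`j > r`. Since the generators form a Gröbner basis for `<_s, …, <_p`, subtracting admissible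
multiples `θ g_i` successively expresses `f` through such multiples; the bound at `s` itself comes
for free, because `θ u_i^{(s)}` is the `s`-th leader of the element being reduced. Among all
admissible expansions of `f`, take one whose greatest `r`-th leading term `v` is smallest, which is
possible because `<_r` is a well-order. If the coefficient of `f` at `v` were zero, the multiples
with leading term `v` would cancel; differences of monic multiples with equal leading term are
multiples of S-polynomials up to smaller admissible multiples, and reducing those S-polynomials to
`0` would give an admissible expansion with a smaller top term. Hence `v` is the `r`-th leader of
`f`, and it equals `θ u_i^{(r)}` for some admissible `θ`.
-/

namespace WeylGB

section PowerProducts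

variable {A : Type*} [Monoid A] {n : ℕ}

/-- The ordered power product `y₁ ^ a₁ * ⋯ * yₙ ^ aₙ`. -/
def powProd (y : Fin n → A) (a : Fin n → ℕ) : A :=
  ((List.finRange n).map fun i => y i ^ a i).prod

theorem powProd_zero (y : Fin n → A) : powProd y 0 = 1 := by
  simp [powProd]

theorem powProd_single (y : Fin n → A) (i : Fin n) (k : ℕ) :
    powProd y (Pi.single i k) = y i ^ k := by
  rw [powProd,
    List.prod_map_eq_pow_single i _ fun j hj _ => by rw [Pi.single_eq_of_ne hj, pow_zero],
    List.count_eq_one_of_mem (List.nodup_finRange n) (List.mem_finRange i), pow_one,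
    Pi.single_eq_same]

theorem powProd_add {y : Fin n → A} (hy : ∀ i j, Commute (y i) (y j)) (a b : Fin n → ℕ) :
    powProd y (a + b) = powProd y a * powProd y b := by
  unfold powProd
  induction List.finRange n with
  | nil => simp
  | cons i l ih =>
    have hcomm : Commute (y i ^ b i) (l.map fun j => y j ^ a j).prod :=
      Commute.list_prod_right _ _ fun z hz => by
        obtain ⟨j, -, rfl⟩ := List.mem_map.1 hz
        exact (hy i j).pow_pow _ _
    simp only [List.map_cons, List.prod_cons, Pi.add_apply] at ih ⊢
    rw [ih, pow_add, mul_assoc, mul_assoc, ← mul_assoc _ _ (List.prod _), hcomm.eq, mul_assoc]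

end PowerProducts

section LeadingShift

variable {K A E ι : Type*} [CommSemiring K] [Semiring A] [Algebra K A] [AddCommMonoid E]
  [Module K E] [Module A E] [IsScalarTower K A E] [Preorder ι] {M : ι → E} {z w : A} {σ τ : ι → ι}

variable (K) in
/-- The operator `z` sends every member `M c` of the family `M` to `M (σ c)`, up to a combination
of members with strictly smaller index. -/
def ShiftsLeading (M : ι → E) (z : A) (σ : ι → ι) : Prop :=
  ∀ c, ∃ q ∈ Submodule.span K (M '' Set.Iio (σ c)), z • M c = M (σ c) + q

theorem ShiftsLeading.smul_mem_span_image (hz : ShiftsLeading K M z σ) {S T : Set ι}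
    (hST : ∀ c ∈ S, Set.Iic (σ c) ⊆ T) {q : E} (hq : q ∈ Submodule.span K (M '' S)) :
    z • q ∈ Submodule.span K (M '' T) := by
  suffices Submodule.span K (M '' S) ≤
      (Submodule.span K (M '' T)).comap (Algebra.lsmul K K E z) from this hq
  rw [Submodule.span_le]
  rintro _ ⟨c, hc, rfl⟩
  obtain ⟨q, hq, hzc⟩ := hz c
  change z • M c ∈ Submodule.span K (M '' T)
  rw [hzc]
  exact add_mem (Submodule.subset_span ⟨_, hST c hc le_rfl, rfl⟩)
    (Submodule.span_mono (Set.image_mono (Set.Iio_subset_Iic_self.trans (hST c hc))) hq)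

theorem ShiftsLeading.mul (hz : ShiftsLeading K M z σ) (hw : ShiftsLeading K M w τ)
    (hσ : StrictMono σ) : ShiftsLeading K M (z * w) (σ ∘ τ) := fun c => by
  obtain ⟨q, hq, hwc⟩ := hw c
  obtain ⟨q', hq', hzc⟩ := hz (τ c)
  refine ⟨q' + z • q, add_mem hq' (hz.smul_mem_span_image (fun d hd => ?_) hq), ?_⟩
  · exact Set.Iic_subset_Iio.2 (hσ hd)
  · rw [mul_smul, hwc, smul_add, hzc, add_assoc, Function.comp_apply]

theorem ShiftsLeading.mul_of_add [AddSemigroup ι] [AddLeftStrictMono ι] {γ δ : ι}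
    (hz : ShiftsLeading K M z (γ + ·)) (hw : ShiftsLeading K M w (δ + ·)) :
    ShiftsLeading K M (z * w) (γ + δ + ·) := by
  simpa only [Function.comp_def, ← add_assoc] using hz.mul hw (add_right_strictMono (a := γ))

end LeadingShift

section WeylRelations

variable {n : ℕ} {K : Type} [Field K]

/-- The monomial `x ^ γ.1 * ∂ ^ γ.2` of the Weyl algebra. -/
noncomputable def weylMonomial (K : Type) [Field K] (γ : WExp n) : WeylAlg n K :=
  powProd (wx n K) γ.1 * powProd (wd n K) γ.2

theorem commute_wx (i j : Fin n) : Commute (wx n K i) (wx n K j) :=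
  Subtype.ext <| LinearMap.ext fun q => mul_left_comm (X i) (X j) q

theorem commute_wd (i j : Fin n) : Commute (wd n K i) (wd n K j) :=
  Subtype.ext <| LinearMap.ext fun q => by
    change pderiv i (pderiv j q) = pderiv j (pderiv i q)
    obtain rfl | hij := eq_or_ne i j
    · rfl
    · ext s
      simp only [coeff_pderiv, Finsupp.add_apply, Finsupp.single_eq_of_ne hij,
        Finsupp.single_eq_of_ne hij.symm, add_zero]
      rw [add_right_comm, mul_right_comm]

theorem powProd_wx_apply (a : Fin n →₀ ℕ) (q : MvPolynomial (Fin n) K) :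
    (powProd (wx n K) a).1 q = monomial a 1 * q := by
  induction a using Finsupp.induction_linear generalizing q with
  | zero => rw [Finsupp.coe_zero, powProd_zero, ← C_apply, C_1, one_mul]; rfl
  | add a b iha ihb =>
    rw [Finsupp.coe_add, powProd_add commute_wx, Subalgebra.coe_mul, Module.End.mul_apply, ihb,
      iha, ← mul_assoc, monomial_mul, one_mul]
  | single i k =>
    rw [Finsupp.single_eq_pi_single, powProd_single, Subalgebra.coe_pow]
    change (LinearMap.mulLeft K (X i) ^ k) q = _
    rw [LinearMap.pow_mulLeft, LinearMap.mulLeft_apply, X_pow_eq_monomial]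

theorem wd_mul_powProd_wx (i : Fin n) (a : Fin n → ℕ) :
    wd n K i * powProd (wx n K) a =
      powProd (wx n K) a * wd n K i + (a i : K) • powProd (wx n K) (a - Pi.single i 1) := by
  obtain ⟨a, rfl⟩ := Finsupp.equivFunOnFinite.surjective a
  refine Subtype.ext <| LinearMap.ext fun q => ?_
  have hsub : (⇑a - Pi.single i 1 : Fin n → ℕ) = ⇑(a - Finsupp.single i 1 : Fin n →₀ ℕ) := by
    rw [Finsupp.coe_tsub, Finsupp.single_eq_pi_single]
  change pderiv i ((powProd (wx n K) a).1 q) = (powProd (wx n K) a).1 (pderiv i q) +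
    (a i : K) • (powProd (wx n K) (⇑a - Pi.single i 1)).1 q
  rw [hsub, powProd_wx_apply, powProd_wx_apply, powProd_wx_apply, Derivation.leibniz,
    pderiv_monomial, one_mul, smul_eq_mul, smul_eq_mul, mul_comm q, ← smul_mul_assoc,
    smul_monomial, smul_eq_mul, mul_one]

theorem powProd_wx_mul_weylMonomial (a : Fin n → ℕ) (γ : WExp n) :
    powProd (wx n K) a * weylMonomial K γ = weylMonomial K ((a, 0) + γ) := by
  simp only [weylMonomial, Prod.fst_add, Prod.snd_add, zero_add, powProd_add commute_wx, mul_assoc]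

theorem wd_mul_weylMonomial (i : Fin n) (γ : WExp n) :
    wd n K i * weylMonomial K γ = weylMonomial K ((0, Pi.single i 1) + γ) +
      (γ.1 i : K) • weylMonomial K (γ.1 - Pi.single i 1, γ.2) := by
  simp only [weylMonomial, Prod.fst_add, Prod.snd_add, zero_add, powProd_add commute_wd,
    powProd_single, pow_one, ← mul_assoc, wd_mul_powProd_wx, add_mul, smul_mul_assoc]

theorem shiftsLeading_powProd_wx (a : Fin n → ℕ) :
    ShiftsLeading K (weylMonomial K) (powProd (wx n K) a) ((a, 0) + ·) := fun γ =>
  ⟨0, zero_mem _, by rw [smul_eq_mul, powProd_wx_mul_weylMonomial, add_zero]⟩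

theorem shiftsLeading_one :
    ShiftsLeading K (weylMonomial (n := n) K) (1 : WeylAlg n K) ((0, 0) + ·) := by
  simpa only [powProd_zero] using shiftsLeading_powProd_wx (K := K) (0 : Fin n → ℕ)

theorem shiftsLeading_wx (i : Fin n) :
    ShiftsLeading K (weylMonomial K) (wx n K i) ((Pi.single i 1, 0) + ·) := by
  simpa only [powProd_single, pow_one] using shiftsLeading_powProd_wx (K := K) (Pi.single i 1)

theorem shiftsLeading_wd (i : Fin n) :
    ShiftsLeading K (weylMonomial K) (wd n K i) ((0, Pi.single i 1) + ·) := fun γ => by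
  refine ⟨_, Submodule.smul_mem _ _ (Submodule.subset_span ⟨_, ?_, rfl⟩), wd_mul_weylMonomial i γ⟩
  rw [Set.mem_Iio, Prod.lt_iff]
  right
  simp [Pi.single_pos]

theorem shiftsLeading_powProd_wd (b : Fin n → ℕ) :
    ShiftsLeading K (weylMonomial K) (powProd (wd n K) b) ((0, b) + ·) := by
  induction b using Pi.single_induction with
  | zero =>
    simpa only [powProd_zero] using shiftsLeading_one
  | add b b' ih ih' =>
    rw [powProd_add commute_wd]
    simpa only [Prod.mk_add_mk, add_zero] using ih.mul_of_add ih'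
  | single i k =>
    induction k with
    | zero =>
      simpa only [Pi.single_zero, powProd_zero] using shiftsLeading_one
    | succ k ih =>
      rw [Pi.single_add, powProd_add commute_wd, powProd_single _ _ 1, pow_one]
      simpa only [Prod.mk_add_mk, add_zero] using ih.mul_of_add (shiftsLeading_wd i)

theorem shiftsLeading_weylMonomial (γ : WExp n) :
    ShiftsLeading K (weylMonomial K) (weylMonomial K γ) (γ + ·) := by
  simpa only [weylMonomial, Prod.mk_add_mk, add_zero, zero_add, Prod.mk.eta] using
    (shiftsLeading_powProd_wx (K := K) γ.1).mul_of_add (shiftsLeading_powProd_wd γ.2)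

end WeylRelations

section WeylBasis

variable {n : ℕ} {K : Type} [Field K]

theorem wd_pow_apply_monomial (i : Fin n) (k : ℕ) (s : Fin n →₀ ℕ) (c : K) :
    (wd n K i ^ k).1 (monomial s c) =
      monomial (s - Finsupp.single i k) (c * (s i).descFactorial k) := by
  induction k with
  | zero => simp
  | succ k ih =>
    rw [pow_succ', Subalgebra.coe_mul, Module.End.mul_apply, ih]
    refine pderiv_monomial.trans ?_
    rw [tsub_tsub, ← Finsupp.single_add, Finsupp.tsub_apply, Finsupp.single_eq_same, mul_assoc,
      Nat.descFactorial_succ, mul_comm (s i - k), Nat.cast_mul]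

theorem powProd_wd_apply_monomial (b s : Fin n →₀ ℕ) (c : K) :
    (powProd (wd n K) b).1 (monomial s c) =
      monomial (s - b) (c * ∏ i, ((s i).descFactorial (b i) : K)) := by
  induction b using Finsupp.induction_linear generalizing s c with
  | zero => simp [powProd_zero]
  | add b b' ih ih' =>
    have hdesc (i : Fin n) : ((s i).descFactorial (b' i) : K) * (s i - b' i).descFactorial (b i) =
        (s i).descFactorial (b i + b' i) := by
      rw [← Nat.descFactorial_mul_descFactorial (Nat.le_add_left (b' i) (b i)),
        Nat.add_sub_cancel, Nat.cast_mul, mul_comm]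
    rw [Finsupp.coe_add, powProd_add commute_wd, Subalgebra.coe_mul, Module.End.mul_apply, ih', ih,
      mul_assoc, ← Finset.prod_mul_distrib, tsub_tsub, add_comm b']
    simp only [Finsupp.tsub_apply, hdesc, Pi.add_apply]
  | single i k =>
    rw [Finsupp.single_eq_pi_single, powProd_single, wd_pow_apply_monomial,
      ← Finsupp.single_eq_pi_single, Finset.prod_eq_single i]
    · rw [Finsupp.single_eq_same]
    · intro j _ hj
      rw [Finsupp.single_eq_of_ne hj, Nat.descFactorial_zero, Nat.cast_one]
    · simp

theorem prod_descFactorial_eq_zero {ι R : Type*} [Fintype ι] [CommSemiring R] {b s : ι → ℕ}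
    (h : ¬ b ≤ s) : ∏ i, ((s i).descFactorial (b i) : R) = 0 := by
  obtain ⟨i, hi⟩ : ∃ i, s i < b i := by simpa [Pi.le_def] using h
  exact Finset.prod_eq_zero (Finset.mem_univ i) (by rw [Nat.descFactorial_of_lt hi, Nat.cast_zero])

theorem weylMonomial_apply_monomial (γ : WExp n) (s : Fin n →₀ ℕ) :
    (weylMonomial K γ).1 (monomial s 1) =
      monomial (Finsupp.equivFunOnFinite.symm (γ.1 + (⇑s - γ.2)))
        (∏ i, ((s i).descFactorial (γ.2 i) : K)) := by
  obtain ⟨a, ha⟩ := Finsupp.equivFunOnFinite.surjective γ.1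
  obtain ⟨b, hb⟩ := Finsupp.equivFunOnFinite.surjective γ.2
  rw [weylMonomial, Subalgebra.coe_mul, Module.End.mul_apply, ← ha, ← hb]
  refine (congrArg _ (powProd_wd_apply_monomial b s 1)).trans ((powProd_wx_apply a _).trans ?_)
  rw [monomial_mul, one_mul, one_mul]
  congr 2
  ext
  rfl

/-- The coefficient of `x ^ γ.1` in the value of an operator at `x ^ γ.2`. -/
noncomputable def weylCoeff (K : Type) [Field K] (γ : WExp n) : WeylAlg n K →ₗ[K] K :=
  lcoeff K (Finsupp.equivFunOnFinite.symm γ.1) ∘ₗ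
    LinearMap.applyₗ (monomial (Finsupp.equivFunOnFinite.symm γ.2) 1) ∘ₗ
      (WeylAlg n K).val.toLinearMap

theorem weylCoeff_weylMonomial (γ δ : WExp n) :
    weylCoeff K γ (weylMonomial K δ) =
      if δ.1 + (γ.2 - δ.2) = γ.1 then ∏ i, ((γ.2 i).descFactorial (δ.2 i) : K) else 0 := by
  change coeff _ ((weylMonomial K δ).1 (monomial _ 1)) = _
  rw [weylMonomial_apply_monomial, coeff_monomial]
  simp only [EmbeddingLike.apply_eq_iff_eq, Finsupp.coe_equivFunOnFinite_symm]

theorem weylCoeff_weylMonomial_eq_zero {γ δ : WExp n} (hne : δ ≠ γ) (hlt : ¬ δ.2 < γ.2) :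
    weylCoeff K γ (weylMonomial K δ) = 0 := by
  rw [weylCoeff_weylMonomial, ite_eq_right_iff]
  intro h
  refine prod_descFactorial_eq_zero fun hle => hne ?_
  have heq : δ.2 = γ.2 := hle.eq_of_not_lt hlt
  rw [heq, tsub_self, add_zero] at h
  exact Prod.ext h heq

theorem weylCoeff_weylMonomial_self_ne_zero [CharZero K] (γ : WExp n) :
    weylCoeff K γ (weylMonomial K γ) ≠ 0 := by
  rw [weylCoeff_weylMonomial, tsub_self, add_zero, if_pos rfl, Finset.prod_ne_zero_iff]
  intro i _
  rw [Nat.descFactorial_self]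
  exact Nat.cast_ne_zero.2 (Nat.factorial_ne_zero _)

theorem linearIndependent_weylMonomial [CharZero K] :
    LinearIndependent K (weylMonomial K (n := n)) := by
  refine (injective_iff_map_eq_zero _).2 fun c hc => ?_
  suffices h : ∀ (b a : Fin n → ℕ), c (a, b) = 0 from Finsupp.ext fun γ => h γ.2 γ.1
  intro b
  induction b using WellFoundedLT.induction with | ind b ih => ?_
  intro a
  have hsum : c.sum (fun δ k => k * weylCoeff K (a, b) (weylMonomial K δ)) = 0 := by
    simpa [Finsupp.linearCombination_apply, map_finsuppSum] using congrArg (weylCoeff K (a, b)) hc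
  rw [Finsupp.sum, Finset.sum_eq_single (a, b)] at hsum
  · exact (mul_eq_zero.1 hsum).resolve_right (weylCoeff_weylMonomial_self_ne_zero _)
  · intro δ _ hne
    by_cases hlt : δ.2 < b
    · rw [ih δ.2 hlt δ.1, zero_mul]
    · rw [weylCoeff_weylMonomial_eq_zero hne hlt, mul_zero]
  · intro h
    rw [Finsupp.notMem_support_iff.1 h, zero_mul]

theorem mul_mem_span_range_weylMonomial (z : WeylAlg n K) {q : WeylAlg n K}
    (hq : q ∈ Submodule.span K (Set.range (weylMonomial K))) :
    z * q ∈ Submodule.span K (Set.range (weylMonomial K)) := by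
  obtain ⟨z, hz⟩ := z
  induction hz using Algebra.adjoin_induction generalizing q with
  | mem z hz =>
    rw [← Set.image_univ] at hq ⊢
    obtain ⟨i, rfl⟩ | ⟨i, rfl⟩ := hz
    · exact (shiftsLeading_wx i).smul_mem_span_image (fun _ _ => Set.subset_univ _) hq
    · exact (shiftsLeading_wd i).smul_mem_span_image (fun _ _ => Set.subset_univ _) hq
  | algebraMap r =>
    have := Submodule.smul_mem _ r hq
    rwa [Algebra.smul_def] at this
  | add x y hx hy ihx ihy =>
    have := add_mem (ihx hq) (ihy hq)
    rwa [← add_mul] at this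
  | mul x y hx hy ihx ihy =>
    have := ihx (ihy hq)
    rwa [← mul_assoc] at this

theorem span_range_weylMonomial :
    Submodule.span K (Set.range (weylMonomial K (n := n))) = ⊤ := by
  refine eq_top_iff.2 fun z _ => ?_
  have hone : weylMonomial K (0 : WExp n) = 1 := by simp [weylMonomial, powProd_zero]
  rw [← mul_one z, ← hone]
  exact mul_mem_span_range_weylMonomial z (Submodule.subset_span ⟨0, rfl⟩)

/-- The basis of the Weyl algebra formed by the monomials `x ^ α * ∂ ^ β`. -/
noncomputable def weylBasis (n : ℕ) (K : Type) [Field K] [CharZero K] :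
    Module.Basis (WExp n) K (WeylAlg n K) :=
  .mk linearIndependent_weylMonomial span_range_weylMonomial.ge

/-- The basis of the free module formed by the terms `θ eᵢ`. -/
noncomputable def termBasis (n m : ℕ) (K : Type) [Field K] [CharZero K] :
    Module.Basis (WTerm n m) K (Fin m → WeylAlg n K) :=
  (Pi.basis fun _ => weylBasis n K).reindex
    ((Equiv.sigmaEquivProd (Fin m) (WExp n)).trans (Equiv.prodComm _ _))

theorem termBasis_apply [CharZero K] {m : ℕ} (u : WTerm n m) :
    termBasis n m K u = Pi.single u.2 (weylMonomial K u.1) := by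
  rw [termBasis, Module.Basis.reindex_apply, Pi.basis_apply, weylBasis, Module.Basis.mk_apply]
  rfl

theorem represents_iff [CharZero K] {m : ℕ} {c : WTerm n m →₀ K} {f : Fin m → WeylAlg n K} :
    Represents c f ↔ (termBasis n m K).repr f = c := by
  rw [← LinearEquiv.eq_symm_apply, Module.Basis.repr_symm_apply]
  simp only [Represents, Finsupp.linearCombination_apply, termBasis_apply]
  rfl

end WeylBasis

section LexKeys

variable {Γ : Type*} [AddCommMonoid Γ]

theorem map_lt_map_add_left (F : List (Γ →+ ℕ)) (c : Γ) {a b : Γ}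
    (h : F.map (· a) < F.map (· b)) : F.map (· (c + a)) < F.map (· (c + b)) := by
  induction F with
  | nil => exact absurd h (lt_irrefl _)
  | cons φ F ih =>
    simp only [List.map_cons, List.cons_lt_cons_iff, map_add, add_lt_add_iff_left,
      add_right_inj] at h ih ⊢
    exact h.imp_right (And.imp_right ih)

theorem map_le_map_of_le [PartialOrder Γ] [ExistsAddOfLE Γ] (F : List (Γ →+ ℕ)) {a b : Γ}
    (h : a ≤ b) : F.map (· a) ≤ F.map (· b) := by
  obtain ⟨c, rfl⟩ := exists_add_of_le h
  refine not_lt.1 fun hlt => ?_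
  induction F with
  | nil => exact lt_irrefl _ hlt
  | cons φ F ih =>
    simp only [List.map_cons, List.cons_lt_cons_iff, map_add] at hlt ih
    obtain hφ | ⟨-, hF⟩ := hlt
    · exact hφ.not_ge (Nat.le_add_right _ _)
    · exact ih hF

end LexKeys

section TermOrders

variable {n p m : ℕ} {B : Fin n → Fin p} {j : Fin p} {θ : WExp n} {s t u : WTerm n m}

/-- The exponent of `xᵢ`. -/
def xExp (i : Fin n) : WExp n →+ ℕ :=
  (Pi.evalAddMonoidHom (fun _ => ℕ) i).comp (AddMonoidHom.fst _ _)

/-- The exponent of `∂ᵢ`. -/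
def dExp (i : Fin n) : WExp n →+ ℕ :=
  (Pi.evalAddMonoidHom (fun _ => ℕ) i).comp (AddMonoidHom.snd _ _)

/-- The `j`-th order of a monomial as an additive function. -/
def blockOrd (B : Fin n → Fin p) (j : Fin p) : WExp n →+ ℕ :=
  ∑ i with B i = j, (xExp i + dExp i)

/-- The additive functions whose values on a monomial make up its comparison vector for `<_j`. -/
def keyHoms (B : Fin n → Fin p) (j : Fin p) : List (WExp n →+ ℕ) :=
  [blockOrd B j] ++
  ((List.finRange p).filter fun k => k ≠ j).map (blockOrd B) ++
  ((List.finRange n).filter fun i => B i = j).map xExp ++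
  ((List.finRange n).filter fun i => B i = j).map dExp ++
  (((List.finRange n).filter fun i => B i ≠ j).map fun i => [xExp i, dExp i]).flatten

theorem ordBlk_eq_blockOrd (B : Fin n → Fin p) (j : Fin p) (γ : WExp n) :
    ordBlk B γ.1 γ.2 j = blockOrd B j γ := by
  simp [ordBlk, blockOrd, xExp, dExp]

theorem keyList_eq_map_keyHoms (B : Fin n → Fin p) (j : Fin p) (γ : WExp n) :
    keyList B j γ = (keyHoms B j).map (· γ) := by
  simp [keyList, keyHoms, ordBlk_eq_blockOrd, xExp, dExp, Function.comp_def, List.map_flatten]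

theorem xExp_mem_keyHoms (B : Fin n → Fin p) (j : Fin p) (i : Fin n) : xExp i ∈ keyHoms B j := by
  simp only [keyHoms, List.mem_append, List.mem_map, List.mem_flatten, List.mem_filter,
    List.mem_finRange, true_and, decide_eq_true_eq]
  by_cases hi : B i = j
  · exact .inl (.inl (.inr ⟨i, hi, rfl⟩))
  · exact .inr ⟨_, ⟨i, hi, rfl⟩, by simp⟩

theorem dExp_mem_keyHoms (B : Fin n → Fin p) (j : Fin p) (i : Fin n) : dExp i ∈ keyHoms B j := by
  simp only [keyHoms, List.mem_append, List.mem_map, List.mem_flatten, List.mem_filter,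
    List.mem_finRange, true_and, decide_eq_true_eq]
  by_cases hi : B i = j
  · exact .inl (.inr ⟨i, hi, rfl⟩)
  · exact .inr ⟨_, ⟨i, hi, rfl⟩, by simp⟩

theorem keyList_injective (B : Fin n → Fin p) (j : Fin p) : Function.Injective (keyList B j) := by
  intro γ δ h
  simp only [keyList_eq_map_keyHoms, List.map_inj_left] at h
  exact Prod.ext (_root_.funext fun i => h _ (xExp_mem_keyHoms B j i))
    (_root_.funext fun i => h _ (dExp_mem_keyHoms B j i))

/-- The position of a term in `<_j`, as an element of a linear order. -/
def termKey (B : Fin n → Fin p) (j : Fin p) (t : WTerm n m) : List ℕ ×ₗ Fin m :=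
  toLex (keyList B j t.1, t.2)

theorem termKey_injective (B : Fin n → Fin p) (j : Fin p) :
    Function.Injective (termKey (m := m) B j) := fun s t h => by
  have h' := Prod.ext_iff.1 (toLex_inj.1 h)
  exact Prod.ext (keyList_injective B j h'.1) h'.2

theorem termLt_iff : termLt B j s t ↔ termKey B j s < termKey B j t := by
  rw [Prod.Lex.lt_iff]
  exact or_congr Iff.rfl (and_congr_left' (keyList_injective B j).eq_iff.symm)

theorem termKey_strictMono (B : Fin n → Fin p) (j : Fin p) :
    StrictMono (termKey (m := m) B j) := by
  refine Monotone.strictMono_of_injective (fun s t h => ?_) (termKey_injective B j)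
  refine Prod.Lex.toLex_mono ⟨?_, h.2⟩
  simpa only [keyList_eq_map_keyHoms] using map_le_map_of_le _ h.1

theorem termLt_of_lt (h : s < t) : termLt B j s t := termLt_iff.2 (termKey_strictMono B j h)

theorem termLt_trans (hst : termLt B j s t) (htu : termLt B j t u) : termLt B j s u :=
  termLt_iff.2 ((termLt_iff.1 hst).trans (termLt_iff.1 htu))

theorem termLt_irrefl : ¬ termLt B j s s := fun h => (termLt_iff.1 h).false

theorem termLt_trichotomy (B : Fin n → Fin p) (j : Fin p) (s t : WTerm n m) :
    termLt B j s t ∨ s = t ∨ termLt B j t s := by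
  simpa only [termLt_iff, (termKey_injective B j).eq_iff] using
    lt_trichotomy (termKey B j s) (termKey B j t)

theorem wellFounded_termLt (B : Fin n → Fin p) (j : Fin p) :
    WellFounded (termLt (m := m) B j) := by
  have hpwo : (Set.range (termKey (m := m) B j)).IsPWO := by
    rw [← Set.image_univ]
    exact (Set.isPWO_of_wellQuasiOrderedLE _).image_of_monotone (termKey_strictMono B j).monotone
  exact Subrelation.wf termLt_iff.1 (Set.wellFoundedOn_range.1 hpwo.isWF)

/-- The multiple of the term `u` by the monomial with exponents `θ`. -/
def termMul (θ : WExp n) (u : WTerm n m) : WTerm n m := (θ + u.1, u.2)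

theorem add_termMul (γ θ : WExp n) (u : WTerm n m) :
    termMul (γ + θ) u = termMul γ (termMul θ u) := by
  rw [termMul, termMul, termMul, add_assoc]

theorem termMul_strictMono_left (u : WTerm n m) : StrictMono (termMul · u) := fun _ _ h =>
  Prod.mk_lt_mk_iff_left.2 (add_lt_add_left h u.1)

theorem termMul_tquot (h : tdvd s t) : termMul (tquot t s) s = t :=
  Prod.ext (Prod.ext (tsub_add_cancel_of_le h.2.1) (tsub_add_cancel_of_le h.2.2)) h.1

theorem tdvd_termMul (θ : WExp n) (u : WTerm n m) : tdvd u (termMul θ u) :=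
  ⟨rfl, le_add_self, le_add_self⟩

theorem tquot_termMul (θ : WExp n) (u : WTerm n m) : tquot (termMul θ u) u = θ :=
  Prod.ext (add_tsub_cancel_right _ _) (add_tsub_cancel_right _ _)

theorem termLt_termMul (θ : WExp n) (h : termLt B j s t) :
    termLt B j (termMul θ s) (termMul θ t) := by
  refine h.imp (fun h => ?_) (And.imp_left (congrArg (θ + ·)))
  simp only [monLt, keyList_eq_map_keyHoms] at h ⊢
  exact map_lt_map_add_left _ θ h

theorem termLt_of_le_termMul (h : termLt B j t u) (hs : s ≤ termMul θ t) :
    termLt B j s (termMul θ u) := by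
  obtain rfl | hlt := hs.eq_or_lt
  · exact termLt_termMul θ h
  · exact termLt_trans (termLt_of_lt hlt) (termLt_termMul θ h)

theorem ordT_termMul : ordT B j (termMul θ u) = blockOrd B j θ + ordT B j u := by
  simp only [ordT, ordBlk_eq_blockOrd, termMul, map_add]

theorem ordT_le_of_termLt (h : termLt B j s t) : ordT B j s ≤ ordT B j t := by
  obtain h | ⟨h, -⟩ := h
  · obtain h | ⟨h, -⟩ := List.cons_lt_cons_iff.1 h
    exacts [h.le, h.le]
  · rw [ordT, ordT, h]

end TermOrders

section Leaders

variable {n p m : ℕ} {K : Type} [Field K] {E : Type*} [AddCommGroup E] [Module K E]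
  {B : Fin n → Fin p} {j : Fin p} {b : Module.Basis (WTerm n m) K E} {f : E} {c : WTerm n m →₀ K}
  {u s : WTerm n m}

theorem exists_isLeader (B : Fin n → Fin p) (j : Fin p) (hc : c ≠ 0) : ∃ u, IsLeader B j c u := by
  obtain ⟨u, hu, hmax⟩ :=
    c.support.exists_max_image (termKey B j) (Finsupp.support_nonempty_iff.2 hc)
  exact ⟨u, hu, fun t ht hne => termLt_iff.2 <|
    (hmax t ht).lt_of_ne ((termKey_injective B j).ne hne)⟩

theorem isLeader_unique (hu : IsLeader B j c u) (hs : IsLeader B j c s) : u = s := by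
  by_contra hne
  exact termLt_irrefl (termLt_trans (hs.2 u hu.1 hne) (hu.2 s hs.1 (Ne.symm hne)))

theorem ordT_le_of_isLeader (hu : IsLeader B j c u) (hs : s ∈ c.support) :
    ordT B j s ≤ ordT B j u := by
  obtain rfl | hne := eq_or_ne s u
  · exact le_rfl
  · exact ordT_le_of_termLt (hu.2 s hs hne)

theorem sub_smul_mem_span_of_isLeader (hu : IsLeader B j (b.repr f) u) :
    f - b.repr f u • b u ∈ Submodule.span K (b '' {s | termLt B j s u}) := by
  rw [Module.Basis.mem_span_image]
  intro s hs
  rw [Finset.mem_coe, map_sub, map_smul, b.repr_self, Finsupp.smul_single, smul_eq_mul, mul_one,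
    Finsupp.mem_support_iff, Finsupp.sub_apply] at hs
  obtain rfl | hne := eq_or_ne s u
  · simp at hs
  · rw [Finsupp.single_eq_of_ne hne, sub_zero] at hs
    exact hu.2 s (Finsupp.mem_support_iff.2 hs) hne

theorem isLeader_of_mem_span (hf : f ∈ Submodule.span K (b '' {s | s = u ∨ termLt B j s u}))
    (hu : b.repr f u ≠ 0) : IsLeader B j (b.repr f) u :=
  ⟨Finsupp.mem_support_iff.2 hu, fun _ hs hne =>
    ((Module.Basis.mem_span_image b).1 hf hs).resolve_left hne⟩

end Leaders

section AdmissibleSpan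

variable {n p m t : ℕ} {K : Type} [Field K]

/-- The condition `ord_j θ + ord_j u_j ≤ d_j` for all `j > r` imposed on a multiplier `θ` of an
element with leaders `u`. -/
def Admissible (B : Fin n → Fin p) (r : Fin p) (d : Fin p → ℕ) (u : Fin p → WTerm n m)
    (θ : WExp n) : Prop :=
  ∀ j, r < j → blockOrd B j θ + ordT B j (u j) ≤ d j

/-- The terms whose `j`-th order is at most `d j` for all `j > r`. -/
def boundedTerms (B : Fin n → Fin p) (r : Fin p) (d : Fin p → ℕ) : Set (WTerm n m) :=
  {s | ∀ j, r < j → ordT B j s ≤ d j}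

/-- The span of the multiples `θ gᵢ` with `θ` admissible and `r`-th leading term in `S`. -/
def admissibleSpan {A E : Type*} [Semiring A] [AddCommMonoid E] [Module K E] [Module A E]
    (M : WExp n → A) (B : Fin n → Fin p) (r : Fin p) (g : Fin t → E)
    (ug : Fin t → Fin p → WTerm n m) (d : Fin p → ℕ) (S : Set (WTerm n m)) : Submodule K E :=
  Submodule.span K
    {x | ∃ i θ, Admissible B r d (ug i) θ ∧ termMul θ (ug i r) ∈ S ∧ x = M θ • g i}

/-- A basis of terms of a module over an algebra with distinguished monomials `M`, where monomials
multiply with monomials and terms by adding exponents, up to smaller monomials and terms. -/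
structure IsTermBasis {A E : Type*} [Semiring A] [Algebra K A] [AddCommMonoid E] [Module K E]
    [Module A E] (M : WExp n → A) (b : Module.Basis (WTerm n m) K E) : Prop where
  mul_monomial : ∀ γ, ShiftsLeading K M (M γ) (γ + ·)
  smul_term : ∀ γ, ShiftsLeading K b (M γ) (termMul γ)

section Generators

variable {A E : Type*} [Semiring A] [AddCommMonoid E] [Module K E] [Module A E] {M : WExp n → A}
  {B : Fin n → Fin p} {r : Fin p} {g : Fin t → E} {ug : Fin t → Fin p → WTerm n m}
  {d : Fin p → ℕ} {S T : Set (WTerm n m)} {f : E} {i : Fin t} {θ : WExp n}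

theorem admissibleSpan_mono (hST : S ⊆ T) :
    admissibleSpan M B r g ug d S ≤ admissibleSpan (K := K) M B r g ug d T :=
  Submodule.span_mono fun _ ⟨i, θ, hθ, hS, hx⟩ => ⟨i, θ, hθ, hST hS, hx⟩

theorem smul_mem_admissibleSpan (hθ : Admissible B r d (ug i) θ) (hS : termMul θ (ug i r) ∈ S) :
    M θ • g i ∈ admissibleSpan (K := K) M B r g ug d S :=
  Submodule.subset_span ⟨i, θ, hθ, hS, rfl⟩

theorem exists_mem_admissibleSpan_le (hf : f ∈ admissibleSpan (K := K) M B r g ug d S)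
    (hne : f ≠ 0) :
    ∃ v ∈ S, f ∈ admissibleSpan (K := K) M B r g ug d {u | u = v ∨ termLt B r u v} := by
  suffices f = 0 ∨ _ from this.resolve_left hne
  clear hne
  have hmono : ∀ {v w : WTerm n m}, termLt B r v w →
      {u | u = v ∨ termLt B r u v} ⊆ {u | u = w ∨ termLt B r u w} := fun hvw u hu =>
    .inr (hu.elim (· ▸ hvw) (termLt_trans · hvw))
  induction hf using Submodule.span_induction with
  | zero => exact .inl rfl
  | mem x hx =>
    obtain ⟨i, θ, hθ, hS, rfl⟩ := hx
    exact .inr ⟨_, hS, smul_mem_admissibleSpan hθ (.inl rfl)⟩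
  | smul c x _ hx =>
    obtain rfl | ⟨v, hv, hx⟩ := hx
    exacts [.inl (smul_zero c), .inr ⟨v, hv, Submodule.smul_mem _ c hx⟩]
  | add x y _ _ hx hy =>
    obtain rfl | ⟨v, hv, hx⟩ := hx
    · rwa [zero_add]
    obtain rfl | ⟨w, hw, hy⟩ := hy
    · exact .inr ⟨v, hv, by rwa [add_zero]⟩
    obtain hlt | rfl | hlt := termLt_trichotomy B r v w
    · exact .inr ⟨w, hw, add_mem (admissibleSpan_mono (hmono hlt) hx) hy⟩
    · exact .inr ⟨v, hv, add_mem hx hy⟩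
    · exact .inr ⟨v, hv, add_mem hx (admissibleSpan_mono (hmono hlt) hy)⟩

end Generators

variable {A E : Type*} [Semiring A] [Algebra K A] [AddCommGroup E] [Module K E] [Module A E]
  [IsScalarTower K A E] {M : WExp n → A} {b : Module.Basis (WTerm n m) K E}
  {B : Fin n → Fin p} {r : Fin p} {g : Fin t → E} {ug : Fin t → Fin p → WTerm n m}
  {d d' : Fin p → ℕ} {S T : Set (WTerm n m)} {f : E} {i : Fin t} {u v : WTerm n m}
  {γ θ : WExp n}

theorem IsTermBasis.smul_sub_mem_span (hb : IsTermBasis M b)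
    (hu : IsLeader B r (b.repr f) u) (θ : WExp n) :
    M θ • f - b.repr f u • b (termMul θ u) ∈
      Submodule.span K (b '' {s | termLt B r s (termMul θ u)}) := by
  obtain ⟨q, hq, hθ⟩ := hb.smul_term θ u
  have hrest := (hb.smul_term θ).smul_mem_span_image
    (T := {s | termLt B r s (termMul θ u)}) (fun s hs s' hs' => termLt_of_le_termMul hs hs')
    (sub_smul_mem_span_of_isLeader hu)
  have hq' : q ∈ Submodule.span K (b '' {s | termLt B r s (termMul θ u)}) :=
    Submodule.span_mono (Set.image_mono fun _ hs => termLt_of_lt hs) hq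
  convert add_mem hrest (Submodule.smul_mem _ (b.repr f u) hq') using 1
  rw [smul_sub, smul_comm (M θ) (b.repr f u), hθ, smul_add]
  abel

theorem IsTermBasis.repr_smul_termMul (hb : IsTermBasis M b) (hu : IsLeader B r (b.repr f) u)
    (θ : WExp n) : b.repr (M θ • f) (termMul θ u) = b.repr f u := by
  have hlt := (Module.Basis.mem_span_image b).1 (hb.smul_sub_mem_span hu θ)
  have hzero : b.repr (M θ • f - b.repr f u • b (termMul θ u)) (termMul θ u) = 0 :=
    Finsupp.notMem_support_iff.1 fun h => termLt_irrefl (hlt h)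
  simpa [sub_eq_zero] using hzero

theorem IsTermBasis.eq_or_termLt_of_mem_support_smul (hb : IsTermBasis M b)
    (hu : IsLeader B r (b.repr f) u) (hv : v ∈ (b.repr (M θ • f)).support) :
    v = termMul θ u ∨ termLt B r v (termMul θ u) := by
  refine or_iff_not_imp_left.2 fun hne =>
    (Module.Basis.mem_span_image b).1 (hb.smul_sub_mem_span hu θ) ?_
  simpa [hne, Finsupp.single_eq_of_ne hne] using hv

theorem IsTermBasis.admissibleSpan_le (hb : IsTermBasis M b)
    (hlead : ∀ i j, IsLeader B j (b.repr (g i)) (ug i j))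
    (hS : ∀ v ∈ S, ∀ u, termLt B r u v → u ∈ S) :
    admissibleSpan M B r g ug d S ≤ Submodule.span K (b '' (S ∩ boundedTerms B r d)) := by
  refine Submodule.span_le.2 ?_
  rintro _ ⟨i, θ, hθ, hmem, rfl⟩
  refine (Module.Basis.mem_span_image b).2 fun v hv => ⟨?_, fun j hj => ?_⟩
  · obtain rfl | hlt := hb.eq_or_termLt_of_mem_support_smul (hlead i r) hv
    exacts [hmem, hS _ hmem _ hlt]
  · refine le_trans ?_ ((ordT_termMul (θ := θ)).trans_le (hθ j hj))
    obtain rfl | hlt := hb.eq_or_termLt_of_mem_support_smul (hlead i j) hv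
    exacts [le_rfl, ordT_le_of_termLt hlt]

theorem IsTermBasis.admissibleSpan_le_span_boundedTerms (hb : IsTermBasis M b)
    (hlead : ∀ i j, IsLeader B j (b.repr (g i)) (ug i j)) :
    admissibleSpan M B r g ug d S ≤ Submodule.span K (b '' boundedTerms B r d) := by
  have h := hb.admissibleSpan_le (S := Set.univ) (r := r) (d := d) hlead fun _ _ _ _ => trivial
  rw [Set.univ_inter] at h
  exact (admissibleSpan_mono (Set.subset_univ S)).trans h

theorem Admissible.of_le (hγ : Admissible B r d (ug i) γ) (h : θ ≤ γ) :
    Admissible B r d (ug i) θ := fun j hj => by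
  obtain ⟨δ, rfl⟩ := exists_add_of_le h
  have := hγ j hj
  rw [map_add] at this
  omega

theorem Admissible.of_add (hγθ : Admissible B r d (ug i) (γ + θ)) :
    Admissible B r (fun j => d j - blockOrd B j γ) (ug i) θ := fun j hj =>
  Nat.le_sub_of_add_le' <| by simpa only [map_add, add_assoc] using hγθ j hj

theorem Admissible.add (hθ : Admissible B r d (ug i) θ)
    (hd : ∀ j, r < j → blockOrd B j γ + d j ≤ d' j) : Admissible B r d' (ug i) (γ + θ) :=
  fun j hj => by
    have h₁ := hθ j hj
    have h₂ := hd j hj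
    rw [map_add]
    omega

theorem span_Iio_smul_mem_admissibleSpan {q : A}
    (hγ : Admissible B r d (ug i) γ) (hS : ∀ θ < γ, termMul θ (ug i r) ∈ S)
    (hq : q ∈ Submodule.span K (M '' Set.Iio γ)) :
    q • g i ∈ admissibleSpan (K := K) M B r g ug d S := by
  suffices Submodule.span K (M '' Set.Iio γ) ≤
      (admissibleSpan M B r g ug d S).comap
        ((LinearMap.toSpanSingleton A E (g i)).restrictScalars K)
    from this hq
  refine Submodule.span_le.2 ?_
  rintro _ ⟨θ, hθ, rfl⟩
  exact smul_mem_admissibleSpan (hγ.of_le (le_of_lt hθ)) (hS θ hθ)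

theorem IsTermBasis.smul_smul_sub_mem_admissibleSpan (hb : IsTermBasis M b)
    (hγθ : Admissible B r d (ug i) (γ + θ)) (hS : ∀ u < termMul (γ + θ) (ug i r), u ∈ S) :
    M γ • M θ • g i - M (γ + θ) • g i ∈ admissibleSpan (K := K) M B r g ug d S := by
  obtain ⟨q, hq, hmul⟩ := hb.mul_monomial γ θ
  rw [smul_eq_mul] at hmul
  rw [← mul_smul, hmul, add_smul, add_sub_cancel_left]
  exact span_Iio_smul_mem_admissibleSpan hγθ (fun δ hδ => hS _ (termMul_strictMono_left _ hδ)) hq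

theorem IsTermBasis.smul_mem_of_mem_admissibleSpan (hb : IsTermBasis M b)
    (hd : ∀ j, r < j → blockOrd B j γ + d j ≤ d' j) (hST : ∀ u ∈ S, Set.Iic (termMul γ u) ⊆ T)
    (hf : f ∈ admissibleSpan (K := K) M B r g ug d S) :
    M γ • f ∈ admissibleSpan (K := K) M B r g ug d' T := by
  suffices admissibleSpan M B r g ug d S ≤
      (admissibleSpan M B r g ug d' T).comap (Algebra.lsmul K K E (M γ)) from this hf
  refine Submodule.span_le.2 ?_
  rintro _ ⟨i, θ, hθ, hS, rfl⟩
  have hT := hST _ hS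
  rw [← add_termMul] at hT
  have hγθ := hθ.add hd
  simpa using add_mem (hb.smul_smul_sub_mem_admissibleSpan hγθ fun u hu => hT hu.le)
    (smul_mem_admissibleSpan hγθ (hT (Set.mem_Iic.2 le_rfl)))

end AdmissibleSpan

section Reduction

variable {n p m t : ℕ} {K : Type} [Field K]

/-- The multiple of `gᵢ` by the monomial `θ`, divided by the `r`-th leading coefficient of `gᵢ`. -/
noncomputable def monicMul {A E : Type*} [Semiring A] [AddCommMonoid E] [Module K E] [Module A E]
    (M : WExp n → A) (b : Module.Basis (WTerm n m) K E) (r : Fin p) (g : Fin t → E)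
    (ug : Fin t → Fin p → WTerm n m) (θ : WExp n) (i : Fin t) : E :=
  (b.repr (g i) (ug i r))⁻¹ • M θ • g i

theorem smul_monicMul {A E : Type*} [Semiring A] [AddCommMonoid E] [Module K E] [Module A E]
    {M : WExp n → A} {b : Module.Basis (WTerm n m) K E} {B : Fin n → Fin p} {r : Fin p}
    {g : Fin t → E} {ug : Fin t → Fin p → WTerm n m} {i : Fin t}
    (hu : IsLeader B r (b.repr (g i)) (ug i r)) (θ : WExp n) :
    b.repr (g i) (ug i r) • monicMul M b r g ug θ i = M θ • g i :=
  smul_inv_smul₀ (Finsupp.mem_support_iff.1 hu.1) _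

/-- One-step `(<_r, …, <_p)`-reduction of `f` to `h` modulo some `gᵢ`. The multiple that is
subtracted may carry any coefficient. -/
def Reduces {A E : Type*} [Semiring A] [AddCommGroup E] [Module K E] [Module A E]
    (M : WExp n → A) (b : Module.Basis (WTerm n m) K E) (B : Fin n → Fin p) (r : Fin p)
    (g : Fin t → E) (ug : Fin t → Fin p → WTerm n m) (f h : E) : Prop :=
  ∃ i, ∃ w ∈ (b.repr f).support, tdvd (ug i r) w ∧
    (∀ j, r < j → ∀ u, IsLeader B j (b.repr f) u →
      blockOrd B j (tquot w (ug i r)) + ordT B j (ug i j) ≤ ordT B j u) ∧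
    ∃ c : K, h = f - c • M (tquot w (ug i r)) • g i

/-- The least common multiple of two terms with the same free generator. -/
def termLcm (s t : WTerm n m) : WTerm n m := (s.1 ⊔ t.1, s.2)

/-- The `r`-th S-polynomial of `gᵢ` and `gₖ`; meaningful only if their `r`-th leaders have the same
free generator. -/
noncomputable def monicSpoly {A E : Type*} [Semiring A] [AddCommGroup E] [Module K E] [Module A E]
    (M : WExp n → A) (b : Module.Basis (WTerm n m) K E) (r : Fin p) (g : Fin t → E)
    (ug : Fin t → Fin p → WTerm n m) (i k : Fin t) : E :=
  monicMul M b r g ug (tquot (termLcm (ug i r) (ug k r)) (ug i r)) i -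
    monicMul M b r g ug (tquot (termLcm (ug i r) (ug k r)) (ug k r)) k

theorem tdvd_termLcm_left (s t : WTerm n m) : tdvd s (termLcm s t) :=
  ⟨rfl, le_sup_left (b := t.1.1), le_sup_left (b := t.1.2)⟩

theorem tdvd_termLcm_right {s t : WTerm n m} (h : s.2 = t.2) : tdvd t (termLcm s t) :=
  ⟨h.symm, le_sup_right (a := s.1.1), le_sup_right (a := s.1.2)⟩

theorem exists_termMul_termLcm_eq {s t : WTerm n m} {θ η : WExp n}
    (h : termMul θ s = termMul η t) : ∃ τ, termMul θ s = termMul τ (termLcm s t) ∧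
      θ = τ + tquot (termLcm s t) s ∧ η = τ + tquot (termLcm s t) t := by
  have hst : s.2 = t.2 := (Prod.ext_iff.1 h).2
  have hle : (termLcm s t).1 ≤ (termMul θ s).1 :=
    sup_le le_add_self ((congrArg Prod.fst h).symm ▸ le_add_self)
  obtain ⟨τ, hτ⟩ := exists_add_of_le hle
  have hmul : termMul θ s = termMul τ (termLcm s t) := Prod.ext (hτ.trans (add_comm _ _)) rfl
  refine ⟨τ, hmul, ?_, ?_⟩
  · rw [← tquot_termMul (τ + _) s, add_termMul, termMul_tquot (tdvd_termLcm_left s t), ← hmul,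
      tquot_termMul]
  · rw [← tquot_termMul (τ + _) t, add_termMul, termMul_tquot (tdvd_termLcm_right hst), ← hmul, h,
      tquot_termMul]

variable {A E : Type*} [Semiring A] [Algebra K A] [AddCommGroup E] [Module K E] [Module A E]
  [IsScalarTower K A E] {M : WExp n → A} {b : Module.Basis (WTerm n m) K E}
  {B : Fin n → Fin p} {r : Fin p} {g : Fin t → E} {ug : Fin t → Fin p → WTerm n m}
  {d : Fin p → ℕ} {S : Set (WTerm n m)} {f : E} {i k : Fin t} {θ η : WExp n}

theorem IsTermBasis.monicMul_sub_mem_span (hb : IsTermBasis M b)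
    (hu : IsLeader B r (b.repr (g i)) (ug i r)) (θ : WExp n) :
    monicMul M b r g ug θ i - b (termMul θ (ug i r)) ∈
      Submodule.span K (b '' {s | termLt B r s (termMul θ (ug i r))}) := by
  have h := Submodule.smul_mem _ (b.repr (g i) (ug i r))⁻¹ (hb.smul_sub_mem_span hu θ)
  rwa [smul_sub, inv_smul_smul₀ (Finsupp.mem_support_iff.1 hu.1)] at h

theorem IsTermBasis.mem_admissibleSpan_of_reduces (hb : IsTermBasis M b)
    (hlead : ∀ i j, IsLeader B j (b.repr (g i)) (ug i j))
    (hS : ∀ v ∈ S, ∀ u, termLt B r u v → u ∈ S)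
    (hred : Relation.ReflTransGen (Reduces M b B r g ug) f 0)
    (hf : f ∈ Submodule.span K (b '' (S ∩ boundedTerms B r d))) :
    f ∈ admissibleSpan (K := K) M B r g ug d S := by
  induction hred using Relation.ReflTransGen.head_induction_on with
  | refl => exact zero_mem _
  | @head f h hstep _ ih =>
    obtain ⟨i, w, hw, hdvd, hord, c, rfl⟩ := hstep
    have hsupp := (Module.Basis.mem_span_image b).1 hf
    have hθ : Admissible B r d (ug i) (tquot w (ug i r)) := fun j hj => by
      obtain ⟨u, hu⟩ := exists_isLeader B j (Finsupp.support_nonempty_iff.1 ⟨w, hw⟩)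
      exact (hord j hj u hu).trans ((hsupp hu.1).2 j hj)
    have hmul : c • M (tquot w (ug i r)) • g i ∈ admissibleSpan (K := K) M B r g ug d S :=
      Submodule.smul_mem _ c
        (smul_mem_admissibleSpan hθ ((termMul_tquot hdvd).symm ▸ (hsupp hw).1))
    have hh := ih (sub_mem hf (hb.admissibleSpan_le hlead hS hmul))
    simpa only [sub_add_cancel] using add_mem hh hmul

theorem IsTermBasis.monicSpoly_mem_admissibleSpan (hb : IsTermBasis M b)
    (hlead : ∀ i j, IsLeader B j (b.repr (g i)) (ug i j)) (hik : (ug i r).2 = (ug k r).2)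
    (hred : Relation.ReflTransGen (Reduces M b B r g ug) (monicSpoly M b r g ug i k) 0)
    (hi : Admissible B r d (ug i) (tquot (termLcm (ug i r) (ug k r)) (ug i r)))
    (hk : Admissible B r d (ug k) (tquot (termLcm (ug i r) (ug k r)) (ug k r))) :
    monicSpoly M b r g ug i k ∈
      admissibleSpan (K := K) M B r g ug d {s | termLt B r s (termLcm (ug i r) (ug k r))} := by
  refine hb.mem_admissibleSpan_of_reduces hlead (fun v hv u hu => termLt_trans hu hv) hred ?_
  have hbounded : ∀ i θ, Admissible B r d (ug i) θ →
      monicMul M b r g ug θ i ∈ Submodule.span K (b '' boundedTerms B r d) := fun i θ hθ =>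
    Submodule.smul_mem _ _ (hb.admissibleSpan_le_span_boundedTerms hlead
      (smul_mem_admissibleSpan (S := Set.univ) hθ trivial))
  have hlt_i := hb.monicMul_sub_mem_span (hlead i r) (tquot (termLcm (ug i r) (ug k r)) (ug i r))
  have hlt_k := hb.monicMul_sub_mem_span (hlead k r) (tquot (termLcm (ug i r) (ug k r)) (ug k r))
  rw [termMul_tquot (tdvd_termLcm_left _ _)] at hlt_i
  rw [termMul_tquot (tdvd_termLcm_right hik)] at hlt_k
  have hlt := sub_mem hlt_i hlt_k
  have hbd := sub_mem (hbounded i _ hi) (hbounded k _ hk)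
  rw [sub_sub_sub_cancel_right] at hlt
  rw [Module.Basis.mem_span_image] at hlt hbd ⊢
  exact Set.subset_inter hlt hbd

theorem IsTermBasis.smul_monicMul_sub_mem_admissibleSpan (hb : IsTermBasis M b) {τ : WExp n}
    (hτθ : Admissible B r d (ug i) (τ + θ)) (hS : ∀ u < termMul (τ + θ) (ug i r), u ∈ S) :
    M τ • monicMul M b r g ug θ i - monicMul M b r g ug (τ + θ) i ∈
      admissibleSpan (K := K) M B r g ug d S := by
  rw [monicMul, monicMul, smul_comm (M τ), ← smul_sub]
  exact Submodule.smul_mem _ _ (hb.smul_smul_sub_mem_admissibleSpan hτθ hS)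

/-- The difference is a multiple, by some monomial `τ`, of an S-polynomial, up to smaller admissible
multiples. Reducing the S-polynomial with the bounds `d` lowered by the orders of `τ` keeps all
multiples admissible for `d`. -/
theorem IsTermBasis.monicMul_sub_monicMul_mem (hb : IsTermBasis M b)
    (hlead : ∀ i j, IsLeader B j (b.repr (g i)) (ug i j))
    (hS : ∀ i k, (ug i r).2 = (ug k r).2 →
      Relation.ReflTransGen (Reduces M b B r g ug) (monicSpoly M b r g ug i k) 0)
    (hθ : Admissible B r d (ug i) θ) (hη : Admissible B r d (ug k) η)
    (h : termMul θ (ug i r) = termMul η (ug k r)) :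
    monicMul M b r g ug θ i - monicMul M b r g ug η k ∈
      admissibleSpan (K := K) M B r g ug d {s | termLt B r s (termMul θ (ug i r))} := by
  obtain ⟨τ, hτ, hθ', hη'⟩ := exists_termMul_termLcm_eq h
  set T := {s | termLt B r s (termMul θ (ug i r))}
  have hT : ∀ u < termMul θ (ug i r), u ∈ T := fun _ hu => termLt_of_lt hu
  set α := tquot (termLcm (ug i r) (ug k r)) (ug i r)
  set β := tquot (termLcm (ug i r) (ug k r)) (ug k r)
  have hτd : ∀ j, r < j → blockOrd B j τ + (d j - blockOrd B j τ) ≤ d j := fun j hj => by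
    have := hθ j hj
    rw [hθ', map_add] at this
    omega
  have hik : (ug i r).2 = (ug k r).2 := (Prod.ext_iff.1 h).2
  have hτx : M τ • (monicMul M b r g ug α i - monicMul M b r g ug β k) ∈
      admissibleSpan (K := K) M B r g ug d T :=
    hb.smul_mem_of_mem_admissibleSpan hτd
      (fun u hu s hs => (congrArg (termLt B r s) hτ).mpr (termLt_of_le_termMul hu hs))
      (hb.monicSpoly_mem_admissibleSpan hlead hik (hS i k hik) (hθ' ▸ hθ).of_add (hη' ▸ hη).of_add)
  have hi : M τ • monicMul M b r g ug α i - monicMul M b r g ug θ i ∈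
      admissibleSpan (K := K) M B r g ug d T := by
    rw [hθ'] at hθ hT ⊢
    exact hb.smul_monicMul_sub_mem_admissibleSpan hθ hT
  have hk : M τ • monicMul M b r g ug β k - monicMul M b r g ug η k ∈
      admissibleSpan (K := K) M B r g ug d T := by
    rw [h, hη'] at hT
    rw [hη'] at hη ⊢
    exact hb.smul_monicMul_sub_mem_admissibleSpan hη hT
  convert sub_mem (add_mem hτx hk) hi using 1
  rw [smul_sub]
  abel

end Reduction

section Criterion

variable {n p m t : ℕ} {K : Type} [Field K]

/-- The abstract form of `IsGBseq`: `N` is a submodule of any module with a basis of terms. -/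
def IsGroebnerBasis {A E : Type*} [Semiring A] [AddCommMonoid E] [Module K E] [Module A E]
    (b : Module.Basis (WTerm n m) K E) (B : Fin n → Fin p) (r : Fin p) (N : Submodule A E)
    (ug : Fin t → Fin p → WTerm n m) : Prop :=
  ∀ f ∈ N, f ≠ 0 → ∀ uf : Fin p → WTerm n m, (∀ j, IsLeader B j (b.repr f) (uf j)) →
    ∃ i, tdvd (ug i r) (uf r) ∧
      Admissible B r (fun j => ordT B j (uf j)) (ug i) (tquot (uf r) (ug i r))

theorem IsGroebnerBasis.exists_admissible_termMul_eq {A E : Type*} [Semiring A]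
    [AddCommMonoid E] [Module K E] [Module A E] {b : Module.Basis (WTerm n m) K E}
    {B : Fin n → Fin p} {r s : Fin p} {N : Submodule A E} {ug : Fin t → Fin p → WTerm n m}
    {d : Fin p → ℕ} {f : E} {v : WTerm n m} (hG : IsGroebnerBasis b B s N ug)
    (hrs : r ⋖ s) (hfN : f ∈ N) (hf : f ∈ Submodule.span K (b '' boundedTerms B r d))
    (hv : IsLeader B s (b.repr f) v) :
    ∃ i θ, Admissible B r d (ug i) θ ∧ termMul θ (ug i s) = v := by
  have hne : b.repr f ≠ 0 := Finsupp.support_nonempty_iff.1 ⟨v, hv.1⟩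
  choose uf huf using fun j => exists_isLeader B j hne
  obtain rfl := isLeader_unique hv (huf s)
  obtain ⟨i, hdvd, hadm⟩ := hG f hfN (b.repr.map_ne_zero_iff.1 hne) uf huf
  refine ⟨i, _, fun j hrj => ?_, termMul_tquot hdvd⟩
  refine le_trans ?_ ((Module.Basis.mem_span_image b).1 hf (huf j).1 j hrj)
  obtain rfl | hsj := (hrs.ge_of_gt hrj).eq_or_lt
  · -- The Gröbner basis gives no bound at `s`, but `θ u_s` is itself a term of `f`.
    rw [← ordT_termMul, termMul_tquot hdvd]
  · exact hadm j hsj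

section Descent

variable {A E : Type*} [Semiring A] [Algebra K A] [AddCommGroup E] [Module K E] [Module A E]
  [IsScalarTower K A E] {M : WExp n → A} {b : Module.Basis (WTerm n m) K E}
  {B : Fin n → Fin p} {r s : Fin p} {N : Submodule A E} {g : Fin t → E}
  {ug : Fin t → Fin p → WTerm n m} {d : Fin p → ℕ} {f : E} {i : Fin t} {θ : WExp n}

theorem IsTermBasis.sub_smul_monicMul_mem_admissibleSpan (hb : IsTermBasis M b)
    (hlead : ∀ i j, IsLeader B j (b.repr (g i)) (ug i j))
    (hS : ∀ i k, (ug i r).2 = (ug k r).2 →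
      Relation.ReflTransGen (Reduces M b B r g ug) (monicSpoly M b r g ug i k) 0)
    (hθ : Admissible B r d (ug i) θ)
    (hf : f ∈ admissibleSpan (K := K) M B r g ug d
      {u | u = termMul θ (ug i r) ∨ termLt B r u (termMul θ (ug i r))}) :
    f - b.repr f (termMul θ (ug i r)) • monicMul M b r g ug θ i ∈
      admissibleSpan (K := K) M B r g ug d {u | termLt B r u (termMul θ (ug i r))} := by
  set v := termMul θ (ug i r)
  suffices admissibleSpan M B r g ug d {u | u = v ∨ termLt B r u v} ≤
      (admissibleSpan M B r g ug d {u | termLt B r u v}).comap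
        (LinearMap.id - (b.coord v).smulRight (monicMul M b r g ug θ i)) from this hf
  refine Submodule.span_le.2 ?_
  rintro _ ⟨k, η, hη, heq | hlt, rfl⟩
  · have hcoeff : b.repr (M η • g k) v = b.repr (g k) (ug k r) :=
      heq ▸ hb.repr_smul_termMul (hlead k r) η
    have hS' := Submodule.smul_mem _ (b.repr (g k) (ug k r))
      (hb.monicMul_sub_monicMul_mem hlead hS hη hθ heq)
    rw [smul_sub, smul_monicMul (hlead k r), heq] at hS'
    simpa [hcoeff] using hS'
  · have hcoeff : b.repr (M η • g k) v = 0 := Finsupp.notMem_support_iff.1 fun hv => by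
      obtain hv | hv := hb.eq_or_termLt_of_mem_support_smul (hlead k r) hv
      · exact termLt_irrefl (hv ▸ hlt)
      · exact termLt_irrefl (termLt_trans hlt hv)
    simpa [hcoeff] using smul_mem_admissibleSpan (K := K) hη hlt

theorem IsTermBasis.exists_termMul_eq_of_mem_admissibleSpan (hb : IsTermBasis M b)
    (hlead : ∀ i j, IsLeader B j (b.repr (g i)) (ug i j))
    (hS : ∀ i k, (ug i r).2 = (ug k r).2 →
      Relation.ReflTransGen (Reduces M b B r g ug) (monicSpoly M b r g ug i k) 0)
    (hf : f ∈ admissibleSpan (K := K) M B r g ug d Set.univ) (hne : f ≠ 0) :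
    ∃ i θ, Admissible B r d (ug i) θ ∧ IsLeader B r (b.repr f) (termMul θ (ug i r)) := by
  obtain ⟨v, -, hv⟩ := exists_mem_admissibleSpan_le hf hne
  induction v using (wellFounded_termLt (m := m) B r).induction with
  | _ v ih =>
  have hdescend (hlt : f ∈ admissibleSpan (K := K) M B r g ug d {u | termLt B r u v}) :
      ∃ i θ, Admissible B r d (ug i) θ ∧ IsLeader B r (b.repr f) (termMul θ (ug i r)) := by
    obtain ⟨w, hw, hfw⟩ := exists_mem_admissibleSpan_le hlt hne
    exact ih w hw hfw
  by_cases htop : ∃ i θ, Admissible B r d (ug i) θ ∧ termMul θ (ug i r) = v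
  · obtain ⟨i, θ, hθ, rfl⟩ := htop
    by_cases hcoeff : b.repr f (termMul θ (ug i r)) = 0
    · have := hb.sub_smul_monicMul_mem_admissibleSpan hlead hS hθ hv
      rw [hcoeff, zero_smul, sub_zero] at this
      exact hdescend this
    · refine ⟨i, θ, hθ, isLeader_of_mem_span (Submodule.span_mono (Set.image_mono
        Set.inter_subset_left) (hb.admissibleSpan_le hlead ?_ hv)) hcoeff⟩
      exact fun w hw u hu => .inr (hw.elim (· ▸ hu) (termLt_trans hu))
  · refine hdescend (Submodule.span_mono ?_ hv)
    rintro x ⟨i, θ, hθ, heq | hlt, hx⟩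
    · exact absurd ⟨i, θ, hθ, heq⟩ htop
    · exact ⟨i, θ, hθ, hlt, hx⟩

theorem IsTermBasis.sub_smul_monicMul_mem_span (hb : IsTermBasis M b)
    (hu : IsLeader B s (b.repr (g i)) (ug i s))
    (hv : IsLeader B s (b.repr f) (termMul θ (ug i s))) :
    f - b.repr f (termMul θ (ug i s)) • monicMul M b s g ug θ i ∈
      Submodule.span K (b '' {u | termLt B s u (termMul θ (ug i s))}) := by
  have hg := Submodule.smul_mem _ (b.repr f (termMul θ (ug i s))) (hb.monicMul_sub_mem_span hu θ)
  convert sub_mem (sub_smul_mem_span_of_isLeader hv) hg using 1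
  rw [smul_sub]
  abel

theorem IsTermBasis.mem_admissibleSpan_of_isGroebnerBasis (hb : IsTermBasis M b)
    (hlead : ∀ i j, IsLeader B j (b.repr (g i)) (ug i j)) (hgN : ∀ i, g i ∈ N) (hrs : r ⋖ s)
    (hG : IsGroebnerBasis b B s N ug) (hfN : f ∈ N)
    (hf : f ∈ Submodule.span K (b '' boundedTerms B r d)) :
    f ∈ admissibleSpan (K := K) M B r g ug d Set.univ := by
  by_cases hne : f = 0
  · exact hne ▸ zero_mem _
  obtain ⟨v, hv⟩ := exists_isLeader B s (b.repr.map_ne_zero_iff.2 hne)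
  induction v using (wellFounded_termLt (m := m) B s).induction generalizing f with
  | _ v ih =>
  obtain ⟨i, θ, hθ, rfl⟩ := hG.exists_admissible_termMul_eq hrs hfN hf hv
  set h := b.repr f (termMul θ (ug i s)) • monicMul M b s g ug θ i
  have hhN : h ∈ N := N.smul_of_tower_mem _ (N.smul_of_tower_mem _ (N.smul_mem _ (hgN i)))
  have hh : h ∈ admissibleSpan (K := K) M B r g ug d Set.univ :=
    Submodule.smul_mem _ _ (Submodule.smul_mem _ _ (smul_mem_admissibleSpan hθ trivial))
  have hhbd : h ∈ Submodule.span K (b '' boundedTerms B r d) :=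
    hb.admissibleSpan_le_span_boundedTerms hlead hh
  suffices f - h ∈ admissibleSpan (K := K) M B r g ug d Set.univ by
    simpa using add_mem this hh
  by_cases hzero : f - h = 0
  · exact hzero ▸ zero_mem _
  obtain ⟨w, hw⟩ := exists_isLeader B s (b.repr.map_ne_zero_iff.2 hzero)
  have hlt := (Module.Basis.mem_span_image b).1
    (hb.sub_smul_monicMul_mem_span (hlead i s) hv) hw.1
  exact ih w hlt ((N.restrictScalars K).sub_mem hfN hhN) (sub_mem hf hhbd) hzero hw

end Descent

theorem IsTermBasis.isGroebnerBasis_of_covBy {A E : Type*} [Semiring A] [Algebra K A]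
    [AddCommGroup E] [Module K E] [Module A E] [IsScalarTower K A E] {M : WExp n → A}
    {b : Module.Basis (WTerm n m) K E} {B : Fin n → Fin p} {r s : Fin p} {N : Submodule A E}
    {g : Fin t → E} {ug : Fin t → Fin p → WTerm n m} (hb : IsTermBasis M b)
    (hlead : ∀ i j, IsLeader B j (b.repr (g i)) (ug i j)) (hgN : ∀ i, g i ∈ N) (hrs : r ⋖ s)
    (hG : IsGroebnerBasis b B s N ug)
    (hS : ∀ i k, (ug i r).2 = (ug k r).2 →
      Relation.ReflTransGen (Reduces M b B r g ug) (monicSpoly M b r g ug i k) 0) :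
    IsGroebnerBasis b B r N ug := by
  intro f hfN hne uf huf
  have hbd : f ∈ Submodule.span K (b '' boundedTerms B r fun j => ordT B j (uf j)) :=
    (Module.Basis.mem_span_image b).2 fun u hu j _ => ordT_le_of_isLeader (huf j) hu
  obtain ⟨i, θ, hθ, hlt⟩ := hb.exists_termMul_eq_of_mem_admissibleSpan hlead hS
    (hb.mem_admissibleSpan_of_isGroebnerBasis hlead hgN hrs hG hfN hbd) hne
  refine ⟨i, ?_⟩
  rw [isLeader_unique (huf r) hlt, tquot_termMul]
  exact ⟨tdvd_termMul θ _, hθ⟩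

end Criterion

section FreeModule

variable {n p m t : ℕ} {K : Type} [Field K] [CharZero K] {B : Fin n → Fin p} {r : Fin p}

theorem single_mem_span_termBasis {i : Fin m} {S : Set (WExp n)} {q : WeylAlg n K}
    (hq : q ∈ Submodule.span K (weylMonomial K '' S)) :
    Pi.single i q ∈ Submodule.span K (termBasis n m K '' ((·, i) '' S)) := by
  suffices Submodule.span K (weylMonomial K '' S) ≤
      (Submodule.span K (termBasis n m K '' ((·, i) '' S))).comap
        (LinearMap.single K (fun _ => WeylAlg n K) i) from this hq
  refine Submodule.span_le.2 ?_
  rintro _ ⟨γ, hγ, rfl⟩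
  exact Submodule.subset_span ⟨(γ, i), ⟨γ, hγ, rfl⟩, termBasis_apply _⟩

theorem isTermBasis_termBasis : IsTermBasis (weylMonomial K) (termBasis n m K) where
  mul_monomial := shiftsLeading_weylMonomial
  smul_term γ u := by
    obtain ⟨q, hq, hmul⟩ := shiftsLeading_weylMonomial (K := K) γ u.1
    refine ⟨Pi.single u.2 q, Submodule.span_mono ?_ (single_mem_span_termBasis hq), ?_⟩
    · refine Set.image_mono ?_
      rintro _ ⟨δ, hδ, rfl⟩
      exact Prod.mk_lt_mk_iff_left.2 hδ
    · rw [termBasis_apply, termBasis_apply, ← Pi.single_smul', hmul, Pi.single_add]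
      rfl

theorem isGBseq_iff {N : Submodule (WeylAlg n K) (Fin m → WeylAlg n K)}
    {ug : Fin t → Fin p → WTerm n m} :
    IsGBseq B r N ug ↔ IsGroebnerBasis (termBasis n m K) B r N ug := by
  simp only [IsGBseq, IsGroebnerBasis, Admissible, represents_iff, ordBlk_eq_blockOrd]
  exact forall₃_congr fun f _ _ => ⟨fun h uf huf => h _ uf rfl huf, fun h _ uf hc => hc ▸ h uf⟩

theorem reduces_of_redStep {g : Fin t → Fin m → WeylAlg n K} {cg : WTerm n m →₀ K}
    {ug : Fin t → Fin p → WTerm n m} {i : Fin t} {x y : Fin m → WeylAlg n K}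
    (h : RedStep B r ((List.finRange p).filter fun s => r < s) (g i) cg (ug i) x y) :
    Reduces (weylMonomial K) (termBasis n m K) B r g ug x y := by
  obtain ⟨c, hc, w, hw, hdvd, hord, hxy⟩ := h
  obtain rfl := represents_iff.1 hc
  refine ⟨i, w, hw, hdvd, fun j hj u hu => ?_, _, hxy⟩
  rw [← ordBlk_eq_blockOrd]
  exact hord j (by simpa using hj) u hu

theorem spoly_eq_monicSpoly {g : Fin t → Fin m → WeylAlg n K} {ug : Fin t → Fin p → WTerm n m}
    {i k : Fin t} {ci ck : WTerm n m →₀ K} (hi : Represents ci (g i)) (hk : Represents ck (g k))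
    (hik : (ug i r).2 = (ug k r).2) :
    Spoly r (g i) (g k) ci ck (ug i) (ug k) =
      monicSpoly (weylMonomial K) (termBasis n m K) r g ug i k := by
  obtain rfl := represents_iff.1 hi
  obtain rfl := represents_iff.1 hk
  exact if_pos hik

end FreeModule

end WeylGB

open WeylGB in
theorem statement_14_general {n p m t : ℕ} {K : Type} [Field K] [CharZero K] {B : Fin n → Fin p}
    {N : Submodule (WeylAlg n K) (Fin m → WeylAlg n K)}
    {g : Fin t → Fin m → WeylAlg n K} (hgN : ∀ i, g i ∈ N)
    {cg : Fin t → (WTerm n m →₀ K)} {ug : Fin t → Fin p → WTerm n m}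
    (hrep : ∀ i, Represents (cg i) (g i)) (hlead : ∀ i j, IsLeader B j (cg i) (ug i j))
    {r s : Fin p} (hrs : r ⋖ s) (hseq : IsGBseq B s N ug)
    (hS : ∀ i j : Fin t,
      Relation.ReflTransGen
        (fun x y => ∃ i', RedStep B r ((List.finRange p).filter fun s => r < s)
          (g i') (cg i') (ug i') x y)
        (Spoly r (g i) (g j) (cg i) (cg j) (ug i) (ug j)) 0) :
    IsGBseq B r N ug := by
  refine isGBseq_iff.2 (isTermBasis_termBasis.isGroebnerBasis_of_covBy (g := g) (fun i => ?_) hgN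
    hrs (isGBseq_iff.1 hseq) fun i k hik => ?_)
  · rw [represents_iff.1 (hrep i)]
    exact hlead i
  · rw [← spoly_eq_monicSpoly (hrep i) (hrep k) hik]
    exact Relation.ReflTransGen.mono (fun _ _ ⟨_, h⟩ => reduces_of_redStep h) _ _ (hS i k)

theorem statement_14 (n p m t : ℕ) (hp : 0 < p) (K : Type) [Field K] [CharZero K]
    (nn : Fin p → ℕ) (hn : ∑ j, nn j = n)
    (B : Fin n → Fin p) (hBmono : Monotone B)
    (hBcard : ∀ j, (Finset.univ.filter fun i => B i = j).card = nn j)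
    (N : Submodule (WeylAlg n K) (Fin m → WeylAlg n K))
    (g : Fin t → Fin m → WeylAlg n K) (hgN : ∀ i, g i ∈ N) (hg0 : ∀ i, g i ≠ 0)
    (cg : Fin t → (WTerm n m →₀ K)) (ug : Fin t → Fin p → WTerm n m)
    (hrep : ∀ i, Represents (cg i) (g i))
    (hlead : ∀ i j, IsLeader B j (cg i) (ug i j))
    (r : Fin p) (hr : (r : ℕ) < p - 1)
    (hseq : ∀ s : Fin p, r < s → IsGBseq B s N ug)
    (hS : ∀ i j : Fin t,
      Relation.ReflTransGen
        (fun x y => ∃ i', RedStep B r ((List.finRange p).filter fun s => r < s)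
          (g i') (cg i') (ug i') x y)
        (Spoly r (g i) (g j) (cg i) (cg j) (ug i) (ug j)) 0) :
    IsGBseq B r N ug :=
  statement_14_general hgN hrep hlead
    (Fin.covBy_iff.2 (Nat.covBy_iff_add_one_eq.2 rfl) : r ⋖ ⟨r + 1, Nat.add_lt_of_lt_sub hr⟩)
    (hseq _ (Nat.lt_succ_self (r : ℕ))) hS
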